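/- Let a : ℝ → ℂ be a smooth 2π-periodic function and k ≥ 1 an integer. Then the family (j₁, …, j_{2k}) ↦ Z_{j₁…j_{2k}} · â_{j₁} â_{j₂} ⋯ â_{j_{2k}}, indexed by all 2k-tuples of integers, is absolutely summable: Σ_{j₁,…,j_{2k} ∈ ℤ} |Z_{j₁…j_{2k}} â_{j₁} ⋯ â_{j_{2k}}| < ∞. In particular the zeta-invariant Z_k(a) is well defined. -/

import Mathlib

open scoped BigOperators

/-- `f(n) = n (n+j₁)(n+j₁+j₂)⋯(n+j₁+⋯+j_{2k-1})`. -/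
noncomputable def prodPoly (k : ℕ) (j : Fin (2 * k) → ℤ) (n : ℤ) : ℤ :=
  ∏ m : Fin (2 * k), (n + ∑ i ∈ Finset.Iio m, j i)

/-- `N_{j₁…j_{2k}} = Σ_{n ∈ ℤ} (|f(n)| − f(n))` (a finite sum). -/
noncomputable def Ncoef (k : ℕ) (j : Fin (2 * k) → ℤ) : ℤ :=
  ∑ᶠ n : ℤ, (|prodPoly k j n| - prodPoly k j n)

/-- The symmetrized coefficients `Z_{j₁…j_{2k}}`. -/
noncomputable def Zcoef (k : ℕ) (j : Fin (2 * k) → ℤ) : ℚ :=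
  if ∑ i, j i = 0 then
    (1 / (Nat.factorial (2 * k) : ℚ)) *
      ∑ π : Equiv.Perm (Fin (2 * k)), (Ncoef k (j ∘ π) : ℚ)
  else 0

/-- Fourier coefficients `â_n = (1/(2π)) ∫₀^{2π} e^{-inθ} a(θ) dθ`. -/
noncomputable def fourierCoef (a : ℝ → ℂ) (n : ℤ) : ℂ :=
  (1 / (2 * Real.pi)) *
    ∫ θ in (0 : ℝ)..(2 * Real.pi), Complex.exp (-Complex.I * n * θ) * a θ

/-!
Having even degree, `f` is nonnegative as soon as `|n| ≥ S := ∑ |jᵢ|`, so only `|n| ≤ S` contributes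
to `N`, and there `|f n| ≤ (2 S) ^ (2 k)`. Hence `|Z| ≤ 2 (1 + 2 S) ^ (2 k + 1)`. Since
`1 + S ≤ ∏ (1 + |jᵢ|)`, this growth splits into one weight `(1 + |jᵢ|) ^ (2 k + 1)` per index, and
the multiple series is dominated by a power of `∑ (1 + |n|) ^ (2 k + 1) |â_n|`. The latter
converges: Bessel's inequality for the derivative of order `2 k + 2` makes `n ^ (2 k + 2) â_n`
square summable, and so is `1 / n`.
-/

lemma abs_sum_le_sum_univ_abs {ι R : Type*} [Fintype ι] [AddCommGroup R] [LinearOrder R]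
    [IsOrderedAddMonoid R] (f : ι → R) (s : Finset ι) : |∑ i ∈ s, f i| ≤ ∑ i, |f i| :=
  (Finset.abs_sum_le_sum_abs f s).trans <|
    Finset.sum_le_univ_sum_of_nonneg fun _ => abs_nonneg _

lemma one_add_sum_le_prod_one_add {ι R : Type*} [CommSemiring R] [PartialOrder R]
    [IsOrderedRing R] {f : ι → R} {s : Finset ι} (hf : ∀ i ∈ s, 0 ≤ f i) :
    1 + ∑ i ∈ s, f i ≤ ∏ i ∈ s, (1 + f i) := by
  classical
  induction s using Finset.induction_on with
  | empty => simp
  | insert i s hi ih =>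
    rw [Finset.forall_mem_insert] at hf
    have hprod : 1 ≤ ∏ j ∈ s, (1 + f j) :=
      (le_add_of_nonneg_right (Finset.sum_nonneg hf.2)).trans (ih hf.2)
    calc 1 + ∑ j ∈ insert i s, f j
        = (1 + ∑ j ∈ s, f j) + f i * 1 := by rw [Finset.sum_insert hi]; ring
      _ ≤ ∏ j ∈ s, (1 + f j) + f i * ∏ j ∈ s, (1 + f j) :=
        add_le_add (ih hf.2) (mul_le_mul_of_nonneg_left hprod hf.1)
      _ = ∏ j ∈ insert i s, (1 + f j) := by rw [Finset.prod_insert hi]; ring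

lemma summable_prod_univ_of_nonneg {ι : Type*} [Fintype ι] {κ : ι → Type*}
    {f : ∀ i, κ i → ℝ} (hf : ∀ i x, 0 ≤ f i x) (hs : ∀ i, Summable (f i)) :
    Summable fun x : ∀ i, κ i => ∏ i, f i (x i) := by
  classical
  refine summable_of_sum_le (c := ∏ i, ∑' x, f i x)
    (fun x => Finset.prod_nonneg fun i _ => hf i (x i)) fun s => ?_
  have hsub : s ⊆ Fintype.piFinset fun i => s.image (· i) := fun x hx =>
    Fintype.mem_piFinset.2 fun i => Finset.mem_image_of_mem (· i) hx
  calc ∑ x ∈ s, ∏ i, f i (x i)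
      ≤ ∑ x ∈ Fintype.piFinset fun i => s.image (· i), ∏ i, f i (x i) :=
        Finset.sum_le_sum_of_subset_of_nonneg hsub fun x _ _ =>
          Finset.prod_nonneg fun i _ => hf i (x i)
    _ = ∏ i, ∑ x ∈ s.image (· i), f i x := (Finset.prod_univ_sum _ _).symm
    _ ≤ ∏ i, ∑' x, f i x :=
        Finset.prod_le_prod (fun i _ => Finset.sum_nonneg fun x _ => hf i x)
          fun i _ => (hs i).sum_le_tsum _ fun x _ => hf i x

lemma summable_one_add_abs_pow_mul_norm {E : Type*} [SeminormedAddCommGroup E] {c : ℤ → E}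
    {q : ℕ} (hc : Summable fun n : ℤ => (|(n : ℝ)| ^ (q + 1) * ‖c n‖) ^ 2) :
    Summable fun n : ℤ => (1 + |(n : ℝ)|) ^ q * ‖c n‖ := by
  have hinv : Summable fun n : ℤ => (|(n : ℝ)|⁻¹) ^ 2 := by
    simpa using Real.summable_one_div_int_pow.2 one_lt_two
  refine Summable.of_norm_bounded_eventually ((hinv.add hc).mul_left (2 ^ q)) ?_
  filter_upwards [(Set.finite_singleton (0 : ℤ)).compl_mem_cofinite] with n hn
  have hone : 1 ≤ |(n : ℝ)| := mod_cast Int.one_le_abs hn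
  set x := |(n : ℝ)|⁻¹
  set y := |(n : ℝ)| ^ (q + 1) * ‖c n‖
  have hsplit : |(n : ℝ)| ^ q * ‖c n‖ = x * y := by
    rw [← mul_assoc, pow_succ', inv_mul_cancel_left₀ (by positivity)]
  have hxy : 0 ≤ x * y := by positivity
  rw [Real.norm_of_nonneg (by positivity)]
  calc (1 + |(n : ℝ)|) ^ q * ‖c n‖ ≤ (2 * |(n : ℝ)|) ^ q * ‖c n‖ := by gcongr; linarith
    _ = 2 ^ q * (x * y) := by rw [mul_pow, mul_assoc, hsplit]
    _ ≤ 2 ^ q * (x ^ 2 + y ^ 2) := by gcongr; linarith [two_mul_le_add_sq x y]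

lemma periodic_iteratedDeriv {𝕜 F : Type*} [NontriviallyNormedField 𝕜] [NormedAddCommGroup F]
    [NormedSpace 𝕜 F] {f : 𝕜 → F} {c : 𝕜} (hf : Function.Periodic f c) (p : ℕ) :
    Function.Periodic (iteratedDeriv p f) c := fun x => by
  simpa only [funext hf] using (congrFun (iteratedDeriv_comp_add_const p f c) x).symm

lemma fourierCoef_eq_fourierCoeffOn (a : ℝ → ℂ) (n : ℤ) :
    fourierCoef a n = fourierCoeffOn Real.two_pi_pos a n := by
  rw [fourierCoeffOn_eq_integral, fourierCoef]
  have hexp (θ : ℝ) : fourier (-n) (θ : AddCircle (2 * Real.pi - 0)) =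
      Complex.exp (-Complex.I * n * θ) := by
    rw [fourier_coe_apply]
    congr 1
    have hpi : (Real.pi : ℂ) ≠ 0 := mod_cast Real.pi_ne_zero
    push_cast
    field_simp
    ring
  simp [hexp]

lemma fourierCoef_deriv {a : ℝ → ℂ} (ha : ContDiff ℝ 1 a) (hends : a (2 * Real.pi) = a 0)
    (n : ℤ) : fourierCoef (deriv a) n = Complex.I * n * fourierCoef a n := by
  have hderiv : ∀ x ∈ Set.uIcc 0 (2 * Real.pi), HasDerivAt a (deriv a x) x := fun x _ =>
    (ha.differentiable one_ne_zero x).hasDerivAt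
  have hint : IntervalIntegrable (deriv a) MeasureTheory.volume 0 (2 * Real.pi) :=
    (ha.continuous_deriv le_rfl).intervalIntegrable _ _
  rcases eq_or_ne n 0 with rfl | hn
  · simp [fourierCoef, intervalIntegral.integral_eq_sub_of_hasDerivAt hderiv hint, hends]
  · simp only [fourierCoef_eq_fourierCoeffOn]
    rw [fourierCoeffOn_of_hasDerivAt Real.two_pi_pos hn hderiv hint, hends]
    have hpi : (Real.pi : ℂ) ≠ 0 := mod_cast Real.pi_ne_zero
    push_cast
    field_simp
    ring

lemma fourierCoef_iteratedDeriv {a : ℝ → ℂ} {p : ℕ} (ha : ContDiff ℝ p a)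
    (hper : Function.Periodic a (2 * Real.pi)) (n : ℤ) :
    fourierCoef (iteratedDeriv p a) n = (Complex.I * n) ^ p * fourierCoef a n := by
  induction p with
  | zero => simp
  | succ p ih =>
    obtain ⟨ha, hdiff⟩ := contDiff_nat_succ_iff_contDiff_one_iteratedDeriv.1 ha
    rw [iteratedDeriv_succ, fourierCoef_deriv hdiff (periodic_iteratedDeriv hper p).eq, ih ha]
    ring

lemma summable_sq_norm_fourierCoef {a : ℝ → ℂ}
    (ha : MeasureTheory.MemLp a 2 (MeasureTheory.volume.restrict (Set.Ioc 0 (2 * Real.pi)))) :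
    Summable fun n : ℤ => ‖fourierCoef a n‖ ^ 2 := by
  simpa only [fourierCoef_eq_fourierCoeffOn] using
    (hasSum_sq_fourierCoeffOn Real.two_pi_pos ha).summable

lemma summable_sq_abs_pow_mul_norm_fourierCoef {a : ℝ → ℂ} {p : ℕ} (ha : ContDiff ℝ p a)
    (hper : Function.Periodic a (2 * Real.pi)) :
    Summable fun n : ℤ => (|(n : ℝ)| ^ p * ‖fourierCoef a n‖) ^ 2 := by
  have hcont : Continuous (iteratedDeriv p a) := ha.continuous_iteratedDeriv' p
  have hmem : MeasureTheory.MemLp (iteratedDeriv p a) 2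
      (MeasureTheory.volume.restrict (Set.Ioc 0 (2 * Real.pi))) :=
    (MeasureTheory.memLp_two_iff_integrable_sq_norm hcont.aestronglyMeasurable).2
      (hcont.norm.pow 2).integrableOn_Ioc
  simpa [fourierCoef_iteratedDeriv ha hper] using summable_sq_norm_fourierCoef hmem

section Coefficients

variable {k : ℕ} (j : Fin (2 * k) → ℤ)

lemma abs_prodPoly_le (n : ℤ) : |prodPoly k j n| ≤ (|n| + ∑ i, |j i|) ^ (2 * k) := by
  rw [prodPoly, Finset.abs_prod]
  calc ∏ m : Fin (2 * k), |n + ∑ i ∈ Finset.Iio m, j i|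
      ≤ ∏ _m : Fin (2 * k), (|n| + ∑ i, |j i|) :=
        Finset.prod_le_prod (fun _ _ => abs_nonneg _) fun m _ =>
          (abs_add_le _ _).trans (by gcongr; exact abs_sum_le_sum_univ_abs j _)
    _ = (|n| + ∑ i, |j i|) ^ (2 * k) := by simp

lemma prodPoly_nonneg_of_sum_abs_le {n : ℤ} (hn : ∑ i, |j i| ≤ |n|) : 0 ≤ prodPoly k j n := by
  have hpartial (m : Fin (2 * k)) := abs_le.1 ((abs_sum_le_sum_univ_abs j (Finset.Iio m)).trans hn)
  rcases le_total 0 n with hpos | hneg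
  · rw [abs_of_nonneg hpos] at hpartial
    exact Finset.prod_nonneg fun m _ => by linarith [(hpartial m).1]
  · rw [abs_of_nonpos hneg] at hpartial
    have hfactor (m : Fin (2 * k)) : n + ∑ i ∈ Finset.Iio m, j i ≤ 0 := by
      linarith [(hpartial m).2]
    exact Finset.prod_nonneg_of_card_nonpos_even (by simp [hfactor])

lemma Ncoef_eq_sum_Icc : Ncoef k j = ∑ n ∈ Finset.Icc (-∑ i, |j i|) (∑ i, |j i|),
    (|prodPoly k j n| - prodPoly k j n) := by
  refine finsum_eq_sum_of_support_subset _ fun n hn => ?_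
  rw [Finset.mem_coe, Finset.mem_Icc, ← abs_le]
  contrapose! hn
  simp [abs_of_nonneg (prodPoly_nonneg_of_sum_abs_le j hn.le)]

lemma abs_Ncoef_le : |Ncoef k j| ≤ 2 * (1 + 2 * ∑ i, |j i|) ^ (2 * k + 1) := by
  rw [Ncoef_eq_sum_Icc]
  set S := ∑ i, |j i|
  have hS : 0 ≤ S := Finset.sum_nonneg fun i _ => abs_nonneg (j i)
  have hcard : ((Finset.Icc (-S) S).card : ℤ) = 1 + 2 * S := by
    rw [Int.card_Icc, Int.toNat_of_nonneg] <;> linarith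
  have hterm (n : ℤ) (hn : n ∈ Finset.Icc (-S) S) :
      |(|prodPoly k j n| - prodPoly k j n)| ≤ 2 * (1 + 2 * S) ^ (2 * k) := by
    have hnS : |n| ≤ S := abs_le.2 (Finset.mem_Icc.1 hn)
    calc |(|prodPoly k j n| - prodPoly k j n)|
        ≤ 2 * |prodPoly k j n| := by simpa [two_mul] using abs_sub |prodPoly k j n| (prodPoly k j n)
      _ ≤ 2 * (|n| + S) ^ (2 * k) := by gcongr; exact abs_prodPoly_le j n
      _ ≤ 2 * (1 + 2 * S) ^ (2 * k) := by gcongr 2 * ?_ ^ (2 * k); linarith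
  calc |∑ n ∈ Finset.Icc (-S) S, (|prodPoly k j n| - prodPoly k j n)|
      ≤ ∑ n ∈ Finset.Icc (-S) S, |(|prodPoly k j n| - prodPoly k j n)| :=
        Finset.abs_sum_le_sum_abs _ _
    _ ≤ (Finset.Icc (-S) S).card • (2 * (1 + 2 * S) ^ (2 * k)) :=
        Finset.sum_le_card_nsmul _ _ _ hterm
    _ = 2 * (1 + 2 * S) ^ (2 * k + 1) := by rw [nsmul_eq_mul, hcard]; ring

lemma abs_Zcoef_le : |Zcoef k j| ≤ 2 * (1 + 2 * ∑ i, |(j i : ℚ)|) ^ (2 * k + 1) := by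
  have hperm (π : Equiv.Perm (Fin (2 * k))) :
      |(Ncoef k (j ∘ π) : ℚ)| ≤ 2 * (1 + 2 * ∑ i, |(j i : ℚ)|) ^ (2 * k + 1) := by
    have hN := abs_Ncoef_le (j ∘ π)
    simp only [Function.comp_apply, Equiv.sum_comp π fun i => |j i|] at hN
    exact_mod_cast hN
  rw [Zcoef]
  split_ifs
  · rw [abs_mul, abs_of_pos (by positivity), one_div, inv_mul_le_iff₀ (by positivity)]
    calc |∑ π : Equiv.Perm (Fin (2 * k)), (Ncoef k (j ∘ π) : ℚ)|
        ≤ ∑ π : Equiv.Perm (Fin (2 * k)), |(Ncoef k (j ∘ π) : ℚ)| :=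
          Finset.abs_sum_le_sum_abs _ _
      _ ≤ Finset.univ.card • (2 * (1 + 2 * ∑ i, |(j i : ℚ)|) ^ (2 * k + 1)) :=
          Finset.sum_le_card_nsmul _ _ _ fun π _ => hperm π
      _ = (2 * k).factorial * (2 * (1 + 2 * ∑ i, |(j i : ℚ)|) ^ (2 * k + 1)) := by
          rw [nsmul_eq_mul, Finset.card_univ, Fintype.card_perm, Fintype.card_fin]
  · rw [abs_zero]
    positivity

lemma norm_Zcoef_le_prod :
    ‖(Zcoef k j : ℂ)‖ ≤ 2 ^ (2 * k + 2) * ∏ i, (1 + |(j i : ℝ)|) ^ (2 * k + 1) := by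
  have hprod : 1 + ∑ i, |(j i : ℝ)| ≤ ∏ i, (1 + |(j i : ℝ)|) :=
    one_add_sum_le_prod_one_add fun i _ => abs_nonneg _
  have hZ : ‖(Zcoef k j : ℂ)‖ = |(Zcoef k j : ℝ)| := by
    rw [← Complex.ofReal_ratCast, Complex.norm_real, Real.norm_eq_abs]
  calc ‖(Zcoef k j : ℂ)‖
      ≤ 2 * (1 + 2 * ∑ i, |(j i : ℝ)|) ^ (2 * k + 1) := by
        rw [hZ]; exact_mod_cast abs_Zcoef_le j
    _ ≤ 2 * (2 * ∏ i, (1 + |(j i : ℝ)|)) ^ (2 * k + 1) := by gcongr; linarith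
    _ = 2 ^ (2 * k + 2) * ∏ i, (1 + |(j i : ℝ)|) ^ (2 * k + 1) := by
        rw [Finset.prod_pow, mul_pow]; ring

end Coefficients

lemma summable_norm_Zcoef_mul_prod {k : ℕ} {c : ℤ → ℂ}
    (hc : Summable fun n : ℤ => (1 + |(n : ℝ)|) ^ (2 * k + 1) * ‖c n‖) :
    Summable fun j : Fin (2 * k) → ℤ => ‖(Zcoef k j : ℂ) * ∏ i, c (j i)‖ := by
  have hprod : Summable fun j : Fin (2 * k) → ℤ =>
      ∏ i, ((1 + |(j i : ℝ)|) ^ (2 * k + 1) * ‖c (j i)‖) :=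
    summable_prod_univ_of_nonneg (f := fun _ (n : ℤ) => (1 + |(n : ℝ)|) ^ (2 * k + 1) * ‖c n‖)
      (fun _ n => by positivity) fun _ => hc
  refine Summable.of_nonneg_of_le (fun _ => norm_nonneg _) (fun j => ?_)
    (hprod.mul_left (2 ^ (2 * k + 2)))
  rw [norm_mul, norm_prod, Finset.prod_mul_distrib, ← mul_assoc]
  gcongr
  exact norm_Zcoef_le_prod j

theorem zetaInvariant_abs_summable_general (k : ℕ) (a : ℝ → ℂ)
    (ha : ContDiff ℝ (2 * k + 2 : ℕ) a) (hper : Function.Periodic a (2 * Real.pi)) :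
    Summable (fun j : Fin (2 * k) → ℤ =>
      ‖(Zcoef k j : ℂ) * ∏ i, fourierCoef a (j i)‖) :=
  summable_norm_Zcoef_mul_prod <| summable_one_add_abs_pow_mul_norm <|
    summable_sq_abs_pow_mul_norm_fourierCoef ha hper

/-- For a smooth `2π`-periodic `a : ℝ → ℂ`, the family
`(j₁,…,j_{2k}) ↦ Z_{j₁…j_{2k}} â_{j₁} ⋯ â_{j_{2k}}` is absolutely summable;
in particular the zeta-invariant `Z_k(a)` is well defined. -/
theorem zetaInvariant_abs_summable (k : ℕ) (hk : 1 ≤ k) (a : ℝ → ℂ)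
    (ha : ContDiff ℝ (⊤ : ℕ∞) a) (hper : Function.Periodic a (2 * Real.pi)) :
    Summable (fun j : Fin (2 * k) → ℤ =>
      ‖(Zcoef k j : ℂ) * ∏ i, fourierCoef a (j i)‖) :=
  zetaInvariant_abs_summable_general k a (contDiff_infty.1 ha _) hper
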